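/- Suppose 𝒜 ⊆ FIN^[∞] satisfies: (i) for every A ∈ 𝒜, E_A is coinfinite, and (ii) for distinct A, A' ∈ 𝒜, E_A ∩ E_{A'} is finite. If 𝒜 is infinite and |𝒜| < 𝔟_h(p≠*) for every h : ω → ω with h(n) → ∞, then there is a B ∈ FIN^[∞] which is almost disjoint from every element of 𝒜. -/

import Mathlib

open Set

/-- `A` is an infinite block sequence in `FIN`: each `A n` is a nonempty finite subset of
`ω` and `max (A n) < min (A (n+1))`. -/
def IsFINBlockSeq (A : ℕ → Finset ℕ) : Prop :=
  (∀ n, (A n).Nonempty) ∧ ∀ n, ∀ i ∈ A n, ∀ j ∈ A (n + 1), i < j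

/-- `FU(A)`, the combinatorial subspace generated by `A`: all unions
`a_{n₀} ∪ ⋯ ∪ a_{n_k}` with `n₀ < ⋯ < n_k`. -/
def FU (A : ℕ → Finset ℕ) : Set (Finset ℕ) :=
  { s | ∃ t : Finset ℕ, t.Nonempty ∧ s = t.biUnion A }

/-- `E_A = ⋃ {a_n : |a_n| = 1}`. -/
def EA (A : ℕ → Finset ℕ) : Set ℕ :=
  { m | ∃ n, (A n).card = 1 ∧ m ∈ A n }

/-- `𝔟_h(p≠*)`: the minimum cardinality of a family `ℱ ⊆ ω^ω` such that for every partial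
function `g` with infinite domain, bounded by `h` on its domain, some `f ∈ ℱ` equals `g`
infinitely often on the domain. -/
noncomputable def bhNum (h : ℕ → ℕ) : Cardinal :=
  sInf { c | ∃ Fam : Set (ℕ → ℕ), Cardinal.mk Fam = c ∧
    ∀ (D : Set ℕ) (g : ℕ → ℕ), D.Infinite → (∀ n ∈ D, g n ≤ h n) →
      ∃ f ∈ Fam, { n ∈ D | f n = g n }.Infinite }

/-!
Choose an infinite coinfinite `Y ⊆ ω` which is either almost disjoint from every `E_A` or equal to
one of them, and look for `B` among the sequences of pairs `{w k, z k}` with `w k ∉ Y` and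
`z k ∈ Y`. Suppose a finite union of such pairs lies in `FU(A)`, and let `{w n, z n}` be its last
pair. If the block of `A` containing `w n` does not contain `z n`, then `{z n}` is itself a block of
`A`, so `z n ∈ E_A`; this happens for only finitely many `n` unless `Y = E_A`. In that case every
earlier `z m` is a singleton block too, separating `w n` from everything below it, and `{w n}` is a
block, contradicting `w n ∉ Y`. Hence for large `n` the block of `A` containing `w n` has maximum
`z n`.

Each `A` therefore predicts `z n` from `w n`. Fixing points `x n ∉ Y` and candidates `y n j ∈ Y`,
`j ≤ h n`, for their partners, a partial function bounded by `h` and eventually different from all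
of the fewer than `𝔟_h(p≠*)` predictions selects the pairs.
-/

section

open Filter Cardinal

theorem exists_infinite_compl_infinite (α : Type*) [Infinite α] :
    ∃ s : Set α, s.Infinite ∧ sᶜ.Infinite := by
  obtain ⟨s, t, hunion, hdisj, hcard⟩ :=
    (infinite_univ (α := α)).exists_union_disjoint_cardinal_eq_of_infinite
  have hcompl : sᶜ = t := (IsCompl.of_eq hdisj.inter_eq hunion).compl_eq
  have hiff : s.Infinite ↔ t.Infinite := by
    rw [← infinite_coe_iff, ← infinite_coe_iff, infinite_iff, infinite_iff, hcard]
  have hor : s.Infinite ∨ t.Infinite := infinite_union.1 (hunion ▸ infinite_univ)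
  exact ⟨s, by tauto, by rw [hcompl]; tauto⟩

theorem exists_infinite_compl_infinite_inter_finite_or_eq {ι α : Type*} [Infinite α]
    {s : Set ι} {E : ι → Set α} (hcoinf : ∀ i ∈ s, (E i)ᶜ.Infinite)
    (hpair : s.Pairwise fun i j => (E i ∩ E j).Finite) :
    ∃ Y : Set α, Y.Infinite ∧ Yᶜ.Infinite ∧ ∀ i ∈ s, (Y ∩ E i).Finite ∨ Y = E i := by
  by_cases h : ∃ i ∈ s, (E i).Infinite
  · obtain ⟨i, hi, hinf⟩ := h
    refine ⟨E i, hinf, hcoinf i hi, fun j hj => ?_⟩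
    by_cases hij : i = j
    · exact Or.inr (congrArg E hij)
    · exact Or.inl (hpair hi hj hij)
  · push Not at h
    obtain ⟨Y, hY, hYc⟩ := exists_infinite_compl_infinite α
    exact ⟨Y, hY, hYc, fun i hi => Or.inl ((h i hi).subset inter_subset_right)⟩

theorem exists_strictMono_forall_mem {S : Set ℕ} (hS : S.Infinite) :
    ∃ d : ℕ → ℕ, StrictMono d ∧ ∀ k, d k ∈ S :=
  Nat.exists_strictMono_subsequence fun N =>
    let ⟨b, hb, hlt⟩ := hS.exists_gt N
    ⟨b, hlt, hb⟩

theorem exists_strictMono_forall_mem_gt {S : Set ℕ} (hS : S.Infinite) (a : ℕ) :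
    ∃ d : ℕ → ℕ, StrictMono d ∧ ∀ k, d k ∈ S ∧ a < d k := by
  obtain ⟨d, hd, hmem⟩ := exists_strictMono_forall_mem (hS.sdiff (finite_Iic a))
  exact ⟨d, hd, fun k => ⟨(hmem k).1, not_le.1 (hmem k).2⟩⟩

theorem exists_seq_mem_lt_succ {S : Set ℕ} (hS : S.Infinite) (F : ℕ → ℕ → ℕ) :
    ∃ x : ℕ → ℕ, ∀ n, x n ∈ S ∧ F n (x n) < x (n + 1) := by
  choose next hmem hlt using hS.exists_gt
  let x : ℕ → ℕ := fun n => Nat.rec (next 0) (fun n a => next (F n a)) n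
  refine ⟨x, fun n => ⟨?_, hlt _⟩⟩
  cases n <;> exact hmem _

theorem exists_strictMono_ladders {Y : Set ℕ} (hY : Y.Infinite) (hYc : Yᶜ.Infinite) (h : ℕ → ℕ) :
    ∃ (x : ℕ → ℕ) (y : ℕ → ℕ → ℕ), (∀ n, x n ∉ Y) ∧ (∀ n j, y n j ∈ Y) ∧
      (∀ n j, x n < y n j) ∧ (∀ n, StrictMono (y n)) ∧
      ∀ m n j, m < n → j ≤ h m → y m j < x n := by
  choose y hymono hy using exists_strictMono_forall_mem_gt hY
  obtain ⟨x, hx⟩ := exists_seq_mem_lt_succ hYc fun n a => y a (h n)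
  have hxmono : StrictMono x := strictMono_nat_of_lt_succ fun n => (hy (x n) (h n)).2.trans (hx n).2
  refine ⟨x, fun n => y (x n), fun n => (hx n).1, fun n j => (hy _ j).1, fun n j => (hy _ j).2,
    fun n => hymono _, fun m n j hmn hj => ?_⟩
  calc y (x m) j ≤ y (x m) (h m) := (hymono _).monotone hj
    _ < x (m + 1) := (hx m).2
    _ ≤ x n := hxmono.monotone hmn

theorem exists_infinite_eq_finite_of_lt_bhNum {ι : Type} {h : ℕ → ℕ} (hι : #ι < bhNum h)
    (f : ι → ℕ → ℕ) :
    ∃ (D : Set ℕ) (g : ℕ → ℕ), D.Infinite ∧ (∀ n ∈ D, g n ≤ h n) ∧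
      ∀ i, {n ∈ D | f i n = g n}.Finite := by
  by_contra! hcon
  have hbh : bhNum h ≤ #(range f) :=
    csInf_le' ⟨range f, rfl, fun D g hD hg => exists_range_iff.2 (hcon D g hD hg)⟩
  exact (hbh.trans mk_range_le).not_gt hι

theorem exists_strictMono_eventually_not_of_lt_bhNum {ι : Type} {h : ℕ → ℕ} (hι : #ι < bhNum h)
    {R : ι → ℕ → ℕ → Prop} (hR : ∀ i n, {j | R i n j}.Subsingleton) :
    ∃ d g : ℕ → ℕ, StrictMono d ∧ (∀ k, g k ≤ h (d k)) ∧ ∀ i, ∀ᶠ k in atTop, ¬ R i (d k) (g k) := by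
  classical
  have hpredict : ∀ i n, ∃ j₀, ∀ j, R i n j → j₀ = j := fun i n => by
    by_cases hex : ∃ j, R i n j
    · exact hex.imp fun j₀ hj₀ j hj => hR i n hj₀ hj
    · exact ⟨0, fun j hj => (hex ⟨j, hj⟩).elim⟩
  choose f hf using hpredict
  obtain ⟨D, g, hD, hg, hfin⟩ := exists_infinite_eq_finite_of_lt_bhNum hι f
  obtain ⟨d, hd, hdD⟩ := exists_strictMono_forall_mem hD
  refine ⟨d, g ∘ d, hd, fun k => hg _ (hdD k), fun i => ?_⟩
  have hev : ∀ᶠ n in atTop, n ∉ {n ∈ D | f i n = g n} :=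
    Nat.cofinite_eq_atTop ▸ (hfin i).eventually_cofinite_notMem
  filter_upwards [hd.tendsto_atTop.eventually hev] with k hk hRk
  exact hk ⟨hdD k, hf i _ _ hRk⟩

theorem finite_FU_inter_of_eventually {B : ℕ → Finset ℕ} {S : Set (Finset ℕ)}
    (h : ∀ᶠ n in atTop, ∀ t : Finset ℕ, IsGreatest (t : Set ℕ) n → t.biUnion B ∉ S) :
    (FU B ∩ S).Finite := by
  obtain ⟨N, hN⟩ := eventually_atTop.1 h
  refine ((Finset.range N).powerset.image (Finset.biUnion · B)).finite_toSet.subset ?_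
  rintro _ ⟨⟨t, ht, rfl⟩, hS⟩
  have hmax : t.max' ht < N := by
    by_contra! hle
    exact hN _ hle t (t.isGreatest_max' ht) hS
  refine Finset.mem_coe.2 (Finset.mem_image_of_mem _ (Finset.mem_powerset.2 fun m hm => ?_))
  exact Finset.mem_range.2 ((t.le_max' m hm).trans_lt hmax)

theorem mem_EA_iff {A : ℕ → Finset ℕ} {e : ℕ} : e ∈ EA A ↔ ∃ p, A p = {e} := by
  constructor
  · rintro ⟨p, hp, he⟩
    exact ⟨p, Finset.eq_singleton_iff_unique_mem.2
      ⟨he, fun r hr => Finset.card_le_one.1 hp.le r hr e he⟩⟩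
  · rintro ⟨p, hp⟩
    exact ⟨p, by simp [hp]⟩

theorem exists_block_subset_of_mem_FU {A : ℕ → Finset ℕ} {s : Finset ℕ} (hs : s ∈ FU A) {a : ℕ}
    (ha : a ∈ s) : ∃ p, a ∈ A p ∧ A p ⊆ s := by
  obtain ⟨u, -, rfl⟩ := hs
  obtain ⟨p, hp, hap⟩ := Finset.mem_biUnion.1 ha
  exact ⟨p, hap, Finset.subset_biUnion_of_mem A hp⟩

/-- `b` is the maximum of a block of `A` containing `a`. For a block sequence this is the partial
function by which `A` predicts `b` from `a`. -/
def IsBlockMax (A : ℕ → Finset ℕ) (a b : ℕ) : Prop :=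
  ∃ p, a ∈ A p ∧ IsGreatest (A p : Set ℕ) b

theorem exists_block_notMem_of_not_isBlockMax {A : ℕ → Finset ℕ} {s : Finset ℕ} (hs : s ∈ FU A)
    {a b : ℕ} (ha : a ∈ s) (hb : b ∈ upperBounds (s : Set ℕ)) (hab : ¬ IsBlockMax A a b) :
    ∃ p, a ∈ A p ∧ A p ⊆ s ∧ b ∉ A p := by
  obtain ⟨p, hap, hps⟩ := exists_block_subset_of_mem_FU hs ha
  exact ⟨p, hap, hps, fun hbp => hab ⟨p, hap, hbp, fun r hr => hb (hps hr)⟩⟩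

namespace IsFINBlockSeq

variable {A : ℕ → Finset ℕ}

theorem lt_of_index_lt (hA : IsFINBlockSeq A) {i j a b : ℕ} (hij : i < j) (ha : a ∈ A i)
    (hb : b ∈ A j) : a < b := by
  induction j, hij using Nat.le_induction generalizing b with
  | base => exact hA.2 i a ha b hb
  | succ m _ ih =>
    obtain ⟨c, hc⟩ := hA.1 m
    exact (ih hc).trans (hA.2 m c hc b hb)

theorem index_le_of_le (hA : IsFINBlockSeq A) {i j a b : ℕ} (ha : a ∈ A i) (hb : b ∈ A j)
    (hab : a ≤ b) : i ≤ j :=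
  not_lt.1 fun hji => (hA.lt_of_index_lt hji hb ha).not_ge hab

theorem index_eq (hA : IsFINBlockSeq A) {i j a : ℕ} (hi : a ∈ A i) (hj : a ∈ A j) : i = j :=
  (hA.index_le_of_le hi hj le_rfl).antisymm (hA.index_le_of_le hj hi le_rfl)

theorem subsingleton_isBlockMax (hA : IsFINBlockSeq A) (a : ℕ) :
    {b | IsBlockMax A a b}.Subsingleton := by
  rintro b ⟨p, hap, hb⟩ c ⟨q, haq, hc⟩
  obtain rfl := hA.index_eq hap haq
  exact hb.unique hc

theorem mem_EA_of_not_isBlockMax (hA : IsFINBlockSeq A) {s : Finset ℕ} (hs : s ∈ FU A) {a b : ℕ}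
    (ha : a ∈ s) (hb : b ∈ s) (hab : a ≤ b) (hgap : ∀ r ∈ s, r ≤ a ∨ r = b)
    (hmax : ¬ IsBlockMax A a b) : b ∈ EA A := by
  have hbs : b ∈ upperBounds (s : Set ℕ) := fun r hr => (hgap r hr).elim (·.trans hab) Eq.le
  obtain ⟨p, hap, -, hbp⟩ := exists_block_notMem_of_not_isBlockMax hs ha hbs hmax
  obtain ⟨q, hbq, hqs⟩ := exists_block_subset_of_mem_FU hs hb
  refine mem_EA_iff.2 ⟨q, Finset.eq_singleton_iff_unique_mem.2 ⟨hbq, fun r hr => ?_⟩⟩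
  refine (hgap r (hqs hr)).resolve_left fun hra => hbp ?_
  have hpq : p = q := (hA.index_le_of_le hap hbq hab).antisymm (hA.index_le_of_le hr hap hra)
  exact hpq ▸ hbq

theorem index_lt_of_lt_mem_EA (hA : IsFINBlockSeq A) {p q r e a : ℕ} (hr : r ∈ A p) (hre : r ≤ e)
    (he : e ∈ EA A) (hea : e < a) (ha : a ∈ A q) : p < q := by
  obtain ⟨o, ho⟩ := mem_EA_iff.1 he
  have heo : e ∈ A o := by simp [ho]
  refine (hA.index_le_of_le hr heo hre).trans_lt
    ((hA.index_le_of_le heo ha hea.le).lt_of_ne ?_)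
  rintro rfl
  exact hea.ne' (by simpa [ho] using ha)

end IsFINBlockSeq

/-- The sequence of pairs `{w k, z k}`, the form in which `B` is sought. -/
def pairSeq (w z : ℕ → ℕ) (k : ℕ) : Finset ℕ :=
  {w k, z k}

section pairSeq

variable {w z : ℕ → ℕ} {t : Finset ℕ} {n r : ℕ}

theorem mem_biUnion_pairSeq : r ∈ t.biUnion (pairSeq w z) ↔ ∃ m ∈ t, r = w m ∨ r = z m := by
  simp only [pairSeq, Finset.mem_biUnion, Finset.mem_insert, Finset.mem_singleton]

theorem isFINBlockSeq_pairSeq (hwz : ∀ k, w k < z k) (hzw : ∀ m n, m < n → z m < w n) :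
    IsFINBlockSeq (pairSeq w z) := by
  refine ⟨fun k => Finset.insert_nonempty _ _, fun k i hi j hj => ?_⟩
  simp only [pairSeq, Finset.mem_insert, Finset.mem_singleton] at hi hj
  have := hwz k
  have := hwz (k + 1)
  have := hzw k (k + 1) k.lt_succ_self
  omega

theorem eq_or_eq_or_le_of_mem_biUnion_pairSeq (hwz : ∀ k, w k < z k)
    (hzw : ∀ m n, m < n → z m < w n) (hn : n ∈ upperBounds (t : Set ℕ))
    (hr : r ∈ t.biUnion (pairSeq w z)) : r = w n ∨ r = z n ∨ ∃ m, r ≤ z m ∧ z m < w n := by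
  obtain ⟨m, hm, hrm⟩ := mem_biUnion_pairSeq.1 hr
  obtain rfl | hmn := (hn hm).eq_or_lt
  · exact hrm.imp_right Or.inl
  · exact Or.inr (Or.inr ⟨m, hrm.elim (fun h => h.trans_le (hwz m).le) Eq.le, hzw m n hmn⟩)

variable {A : ℕ → Finset ℕ}

theorem mem_EA_of_biUnion_pairSeq_mem_FU (hA : IsFINBlockSeq A) (hwz : ∀ k, w k < z k)
    (hzw : ∀ m n, m < n → z m < w n) (hn : IsGreatest (t : Set ℕ) n)
    (hs : t.biUnion (pairSeq w z) ∈ FU A) (hmax : ¬ IsBlockMax A (w n) (z n)) : z n ∈ EA A := by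
  refine hA.mem_EA_of_not_isBlockMax hs (mem_biUnion_pairSeq.2 ⟨n, hn.1, Or.inl rfl⟩)
    (mem_biUnion_pairSeq.2 ⟨n, hn.1, Or.inr rfl⟩) (hwz n).le (fun r hr => ?_) hmax
  obtain h | h | ⟨m, hrm, hmn⟩ := eq_or_eq_or_le_of_mem_biUnion_pairSeq hwz hzw hn.2 hr
  · exact Or.inl h.le
  · exact Or.inr h
  · exact Or.inl (hrm.trans hmn.le)

theorem isBlockMax_of_biUnion_pairSeq_mem_FU (hA : IsFINBlockSeq A) (hwz : ∀ k, w k < z k)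
    (hzw : ∀ m n, m < n → z m < w n) (hw : w n ∉ EA A) (hz : ∀ k, z k ∈ EA A)
    (hn : IsGreatest (t : Set ℕ) n) (hs : t.biUnion (pairSeq w z) ∈ FU A) :
    IsBlockMax A (w n) (z n) := by
  by_contra hmax
  have hle : z n ∈ upperBounds (t.biUnion (pairSeq w z) : Set ℕ) := fun r hr => by
    have := hwz n
    obtain h | h | ⟨m, hrm, hmn⟩ := eq_or_eq_or_le_of_mem_biUnion_pairSeq hwz hzw hn.2 hr <;> omega
  obtain ⟨p, hwp, hps, hzp⟩ := exists_block_notMem_of_not_isBlockMax hs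
    (mem_biUnion_pairSeq.2 ⟨n, hn.1, Or.inl rfl⟩) hle hmax
  refine hw (mem_EA_iff.2 ⟨p, Finset.eq_singleton_iff_unique_mem.2 ⟨hwp, fun r hr => ?_⟩⟩)
  obtain h | rfl | ⟨m, hrm, hmn⟩ := eq_or_eq_or_le_of_mem_biUnion_pairSeq hwz hzw hn.2 (hps hr)
  · exact h
  · exact (hzp hr).elim
  · exact (lt_irrefl p (hA.index_lt_of_lt_mem_EA hr hrm (hz m) hmn hwp)).elim

theorem finite_FU_pairSeq_inter_FU (hA : IsFINBlockSeq A) (hwz : ∀ k, w k < z k)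
    (hzw : ∀ m n, m < n → z m < w n) {Y : Set ℕ} (hw : ∀ k, w k ∉ Y) (hz : ∀ k, z k ∈ Y)
    (hY : (Y ∩ EA A).Finite ∨ Y = EA A) (hmax : ∀ᶠ k in atTop, ¬ IsBlockMax A (w k) (z k)) :
    (FU (pairSeq w z) ∩ FU A).Finite := by
  apply finite_FU_inter_of_eventually
  obtain hfin | rfl := hY
  · have hzmono : StrictMono z := strictMono_nat_of_lt_succ fun k =>
      (hzw k (k + 1) k.lt_succ_self).trans (hwz (k + 1))
    have hev : ∀ᶠ n in atTop, n ∉ Y ∩ EA A :=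
      Nat.cofinite_eq_atTop ▸ hfin.eventually_cofinite_notMem
    filter_upwards [hmax, hzmono.tendsto_atTop.eventually hev] with n hn hzn t ht hs
    exact hzn ⟨hz n, mem_EA_of_biUnion_pairSeq_mem_FU hA hwz hzw ht hs hn⟩
  · filter_upwards [hmax] with n hn t ht hs
    exact hn (isBlockMax_of_biUnion_pairSeq_mem_FU hA hwz hzw (hw n) hz ht hs)

end pairSeq

theorem stmt7_general (𝒜 : Set (ℕ → Finset ℕ)) (hseq : ∀ A ∈ 𝒜, IsFINBlockSeq A)
    (hcoinf : ∀ A ∈ 𝒜, (EA A)ᶜ.Infinite)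
    (hpair : 𝒜.Pairwise fun A A' => (EA A ∩ EA A').Finite)
    (h : ℕ → ℕ) (hsmall : #𝒜 < bhNum h) :
    ∃ B : ℕ → Finset ℕ, IsFINBlockSeq B ∧ ∀ A ∈ 𝒜, (FU B ∩ FU A).Finite := by
  obtain ⟨Y, hYinf, hYcoinf, hY⟩ := exists_infinite_compl_infinite_inter_finite_or_eq hcoinf hpair
  obtain ⟨x, y, hx, hy, hxy, hymono, hyx⟩ := exists_strictMono_ladders hYinf hYcoinf h
  have hpredict (A : 𝒜) (n : ℕ) : {j | IsBlockMax A.1 (x n) (y n j)}.Subsingleton :=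
    ((hseq A A.2).subsingleton_isBlockMax (x n)).preimage (hymono n).injective
  obtain ⟨d, g, hd, hg, hev⟩ := exists_strictMono_eventually_not_of_lt_bhNum hsmall hpredict
  have hwz (k : ℕ) : x (d k) < y (d k) (g k) := hxy _ _
  have hzw (m n : ℕ) (hmn : m < n) : y (d m) (g m) < x (d n) := hyx _ _ _ (hd hmn) (hg m)
  exact ⟨pairSeq (fun k => x (d k)) (fun k => y (d k) (g k)), isFINBlockSeq_pairSeq hwz hzw,
    fun A hA => finite_FU_pairSeq_inter_FU (hseq A hA) hwz hzw (fun k => hx _) (fun k => hy _ _)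
      (hY A hA) (hev ⟨A, hA⟩)⟩

end

/-- If `𝒜 ⊆ FIN^[∞]` is infinite, each `E_A` (`A ∈ 𝒜`) is coinfinite, the `E_A` are
pairwise almost disjoint, and `|𝒜| < 𝔟_h(p≠*)` for every `h` tending to infinity, then
there is `B ∈ FIN^[∞]` almost disjoint from every element of `𝒜`. -/
theorem stmt7 (𝒜 : Set (ℕ → Finset ℕ))
    (hseq : ∀ A ∈ 𝒜, IsFINBlockSeq A)
    (hcoinf : ∀ A ∈ 𝒜, (EA A)ᶜ.Infinite)
    (hpair : 𝒜.Pairwise fun A A' => (EA A ∩ EA A').Finite)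
    (hinf : 𝒜.Infinite)
    (hsmall : ∀ h : ℕ → ℕ, Filter.Tendsto h Filter.atTop Filter.atTop →
      Cardinal.mk 𝒜 < bhNum h) :
    ∃ B : ℕ → Finset ℕ, IsFINBlockSeq B ∧ ∀ A ∈ 𝒜, (FU B ∩ FU A).Finite :=
  stmt7_general 𝒜 hseq hcoinf hpair id (hsmall id Filter.tendsto_id)
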